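/- arXiv:math/0703734 — 2 statements merged into one kernel-verified Lean document; each statement's English description precedes it below -/
import Mathlib

section
/- Let N ≥ 2, let D ⊆ ℝ^N be a compact convex set with ℋ^{N−1}(∂D) = S < ∞, and let Ω ⊆ D be an open convex set with Lebesgue measure |Ω| = m > 0. Then Ω contains an open ball of radius m/S; that is, the inradius of Ω is strictly greater than |Ω| / ℋ^{N−1}(∂Ω) ≥ m/S. -/
open MeasureTheory Metric Filter Topology

noncomputable section

section Helpers
open scoped ENNReal NNReal Pointwise

variable {F : Type*} [NormedAddCommGroup F] [InnerProductSpace ℝ F]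

/-- Two points which are projections are closer than the projected points. -/
theorem ib_nonexp {y y' z z' : F} (h : inner ℝ (y - z) (z' - z) ≤ 0)
    (h' : inner ℝ (y' - z') (z - z') ≤ 0) : dist z z' ≤ dist y y' := by
  rw [dist_eq_norm, dist_eq_norm]
  have h1 : ‖z - z'‖ * ‖z - z'‖ ≤ ‖y - y'‖ * ‖z - z'‖ := by
    refine le_trans ?_ (real_inner_le_norm (y - y') (z - z'))
    rw [← real_inner_self_eq_norm_mul_norm]
    have e : inner ℝ (y - y') (z - z') = inner ℝ (z - z') (z - z')
        - inner ℝ (y - z) (z' - z) - inner ℝ (y' - z') (z - z') := by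
      simp only [inner_sub_left, inner_sub_right]; ring
    linarith
  by_contra! hc
  have : 0 < ‖z - z'‖ := lt_of_le_of_lt (norm_nonneg _) hc
  nlinarith

theorem ib_proj {K : Set F} (hK : Convex ℝ K) {y z : F} (hz : z ∈ K)
    (h : ∀ w ∈ K, dist y z ≤ dist y w) : ∀ w ∈ K, inner ℝ (y - z) (w - z) ≤ 0 := by
  rw [← norm_eq_iInf_iff_real_inner_le_zero hK hz]
  have : Nonempty K := ⟨⟨z, hz⟩⟩
  apply le_antisymm
  · apply le_ciInf
    rintro ⟨w, hw⟩
    simpa [dist_eq_norm] using h w hw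
  · refine ciInf_le (f := fun w : K => ‖y - w‖) ⟨0, ?_⟩ ⟨z, hz⟩
    rintro _ ⟨w, rfl⟩
    exact norm_nonneg _

/-- The inner parallel set is convex. -/
theorem ib_inner_convex {Ω : Set F} (hc : Convex ℝ Ω) (a : ℝ) :
    Convex ℝ {x : F | ball x a ⊆ Ω} := by
  intro x hx y hy s t hs ht hst w hw
  have e : w = s • (x + (w - (s • x + t • y))) + t • (y + (w - (s • x + t • y))) := by
    have : s = 1 - t := by linarith
    subst this
    module
  rw [e]
  rw [mem_ball, dist_eq_norm] at hw
  refine hc (hx ?_) (hy ?_) hs ht hst <;> simpa [mem_ball, dist_eq_norm] using hw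

theorem ib_hausdorff_le {F : Type*} [NormedAddCommGroup F] [MeasurableSpace F] [BorelSpace F] {A B : Set F} (R : F → F → Prop)
    (h : ∀ y ∈ A, ∃ p ∈ B, R y p)
    (h2 : ∀ y ∈ A, ∀ y' ∈ A, ∀ p p', R y p → R y' p' → dist y y' ≤ dist p p')
    {d : ℝ} (hd : 0 ≤ d) : μH[d] A ≤ μH[d] B := by
  classical
  have h3 : ∀ p : F, ∃ y : F, (∃ y ∈ A, R y p) → y ∈ A ∧ R y p := by
    intro p
    by_cases hp : ∃ y ∈ A, R y p
    · obtain ⟨y, hy⟩ := hp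
      exact ⟨y, fun _ => hy⟩
    · exact ⟨p, fun h => absurd h hp⟩
  choose g hg using h3
  let T : Set F := {p ∈ B | ∃ y ∈ A, R y p}
  have hL : LipschitzOnWith 1 g T := by
    apply LipschitzOnWith.of_dist_le_mul
    rintro p ⟨-, hp⟩ q ⟨-, hq⟩
    have a1 := hg p hp
    have a2 := hg q hq
    simpa using h2 _ a1.1 _ a2.1 p q a1.2 a2.2
  have hA : A ⊆ g '' T := by
    intro y hy
    obtain ⟨p, hp, hR⟩ := h y hy
    refine ⟨p, ⟨hp, y, hy, hR⟩, ?_⟩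
    have a1 := hg p ⟨y, hy, hR⟩
    have := h2 _ a1.1 _ hy p p a1.2 hR
    rw [dist_self] at this
    exact dist_le_zero.1 this
  calc μH[d] A ≤ μH[d] (g '' T) := measure_mono hA
    _ ≤ ((1 : ℝ≥0) : ℝ≥0∞) ^ d * μH[d] T := hL.hausdorffMeasure_image_le hd
    _ = μH[d] T := by simp
    _ ≤ μH[d] B := measure_mono (fun p hp => hp.1)

/-- a ray from the closure of a bounded set meets the frontier. -/
theorem ib_ray {C : Set F} (hC : Bornology.IsBounded C) {y v : F} (hy : y ∈ closure C)
    (hv : v ≠ 0) : ∃ s : ℝ, 0 ≤ s ∧ y + s • v ∈ frontier C := by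
  let g : ℝ → F := fun s => y + s • v
  have hg : Continuous g := by fun_prop
  let T := g ⁻¹' closure C
  have hT : IsClosed T := isClosed_closure.preimage hg
  have h0 : (0 : ℝ) ∈ T := by simpa [T, g] using hy
  have hvn : 0 < ‖v‖ := norm_pos_iff.2 hv
  have hb : BddAbove T := by
    obtain ⟨M, hM⟩ := hC.closure.subset_closedBall y
    refine ⟨M / ‖v‖, fun s hs => ?_⟩
    have := hM hs
    simp only [g, mem_closedBall, dist_eq_norm, add_sub_cancel_left, norm_smul] at this
    rw [le_div_iff₀ hvn]
    exact le_trans (mul_le_mul_of_nonneg_right (le_abs_self s) hvn.le) this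
  have hmem : sSup T ∈ T := hT.csSup_mem ⟨0, h0⟩ hb
  refine ⟨sSup T, le_csSup hb h0, ?_⟩
  apply frontier_closure_subset
  apply hg.frontier_preimage_subset
  change sSup T ∈ frontier T
  rw [hT.frontier_eq]
  refine ⟨hmem, fun hi => ?_⟩
  obtain ⟨ε, he, hs⟩ := Metric.isOpen_iff.1 isOpen_interior _ hi
  have : sSup T + ε / 2 ∈ T := by
    apply interior_subset
    apply hs
    rw [mem_ball, Real.dist_eq, add_sub_cancel_left, abs_of_pos (by positivity)]
    linarith
  have := le_csSup hb this
  linarith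

/-- Monotonicity of the Hausdorff measure of the boundary for convex sets. -/
theorem ib_mono [CompleteSpace F] [MeasurableSpace F] [BorelSpace F] {K C : Set F} (hK : Convex ℝ K)
    (ho : IsOpen K) (hC : Bornology.IsBounded C) (hKC : K ⊆ C) {d : ℝ} (hd : 0 ≤ d) :
    μH[d] (frontier K) ≤ μH[d] (frontier C) := by
  apply ib_hausdorff_le (fun y p => ∀ w ∈ closure K, inner ℝ (p - y) (w - y) ≤ 0) _ _ hd
  · intro y hy
    rw [ho.frontier_eq] at hy
    obtain ⟨f, hf⟩ := geometric_hahn_banach_open_point hK ho hy.2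
    set v := (InnerProductSpace.toDual ℝ F).symm f with hv
    have hfv : ∀ x, inner ℝ v x = f x := fun x => InnerProductSpace.toDual_symm_apply
    have hv0 : v ≠ 0 := by
      intro h0
      obtain ⟨x, hx⟩ : K.Nonempty := closure_nonempty_iff.1 ⟨y, hy.1⟩
      have := hf x hx
      rw [← hfv, ← hfv, h0] at this
      simp at this
    obtain ⟨s, hs, hsf⟩ := ib_ray hC (closure_mono hKC hy.1) hv0
    refine ⟨_, hsf, ?_⟩
    intro w hw
    have : f w ≤ f y := by
      have : closure K ⊆ {w | f w ≤ f y} :=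
        closure_minimal (fun x hx => (hf x hx).le) (isClosed_le f.continuous continuous_const)
      exact this hw
    rw [add_sub_cancel_left, inner_smul_left, hfv, map_sub]
    simp only [conj_trivial]
    exact mul_nonpos_of_nonneg_of_nonpos hs (by linarith)
  · intro y hy y' hy' p p' h h'
    exact ib_nonexp (h _ (frontier_subset_closure hy')) (h' _ (frontier_subset_closure hy))

/-- volume of a set thin in all directions orthogonal to `e`. -/
theorem ib_vol {n : ℕ} (A : Set (EuclideanSpace ℝ (Fin (n + 1))))
    (e : EuclideanSpace ℝ (Fin (n + 1))) (he : ‖e‖ = 1) (s : EuclideanSpace ℝ (Fin (n + 1)) → ℝ)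
    (D δ : ℝ) (hD : 0 ≤ D) (hδ : 0 ≤ δ)
    (h1 : ∀ x ∈ A, ∀ y ∈ A, ‖x - y - (s x - s y) • e‖ ≤ D)
    (h2 : ∀ x ∈ A, ∀ y ∈ A, |s x - s y| ≤ δ) :
    volume A ≤ ENNReal.ofReal ((δ + D) * D ^ n) := by
  obtain ⟨b, hb⟩ := Orthonormal.exists_orthonormalBasis_extension_of_card_eq
    (𝕜 := ℝ) (E := EuclideanSpace ℝ (Fin (n + 1))) (ι := Fin (n + 1)) (by simp)
    (v := fun _ => e) (s := {0}) (by
      rw [orthonormal_iff_ite]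
      rintro ⟨i, hi⟩ ⟨j, hj⟩
      simp only [Set.mem_singleton_iff] at hi hj
      subst hi; subst hj
      simp [he])
  have hb0 : b 0 = e := hb 0 rfl
  let P := b.measurableEquiv.trans (MeasurableEquiv.toLp 2 (Fin (n + 1) → ℝ)).symm
  have hP : MeasurePreserving P volume volume :=
    b.measurePreserving_measurableEquiv.trans
      (EuclideanSpace.volume_preserving_symm_measurableEquiv_toLp (Fin (n + 1)))
  have hPi : ∀ x i, P x i = inner ℝ (b i) x := by
    intro x i
    rw [← b.repr_apply_apply]; rfl
  have hvA : volume A = volume (P '' A) := by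
    rw [← hP.measure_preimage_equiv, P.preimage_image]
  rw [hvA]
  refine (Real.volume_pi_le_prod_diam _).trans ?_
  rw [Fin.prod_univ_succ]
  have hdiff : ∀ x ∈ A, ∀ y ∈ A, ∀ i,
      |inner ℝ (b i) (x - y) - (s x - s y) * inner ℝ (b i) (b 0)| ≤ D := by
    intro x hx y hy i
    have := abs_real_inner_le_norm (b i) (x - y - (s x - s y) • e)
    rw [inner_sub_right, inner_smul_right, b.orthonormal.norm_eq_one i, one_mul, ← hb0] at this
    refine this.trans ?_
    rw [hb0]
    exact h1 x hx y hy
  have d0 : ediam (Function.eval (0 : Fin (n + 1)) '' (P '' A)) ≤ ENNReal.ofReal (δ + D) := by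
    apply Metric.ediam_le
    rintro _ ⟨_, ⟨x, hx, rfl⟩, rfl⟩ _ ⟨_, ⟨y, hy, rfl⟩, rfl⟩
    rw [edist_dist]
    apply ENNReal.ofReal_le_ofReal
    simp only [Function.eval, hPi, Real.dist_eq]
    rw [← inner_sub_right]
    have a1 := hdiff x hx y hy 0
    have a2 := h2 x hx y hy
    have a3 : inner ℝ (b 0) (b 0) = (1 : ℝ) := by rw [hb0, real_inner_self_eq_norm_sq, he]; norm_num
    rw [a3, mul_one, abs_le] at a1
    rw [abs_le] at a2 ⊢
    constructor <;> linarith [a1.1, a1.2, a2.1, a2.2]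
  have di : ∀ i : Fin n, ediam (Function.eval i.succ '' (P '' A)) ≤ ENNReal.ofReal D := by
    intro i
    apply Metric.ediam_le
    rintro _ ⟨_, ⟨x, hx, rfl⟩, rfl⟩ _ ⟨_, ⟨y, hy, rfl⟩, rfl⟩
    rw [edist_dist]
    apply ENNReal.ofReal_le_ofReal
    simp only [Function.eval, hPi, Real.dist_eq]
    rw [← inner_sub_right]
    have a1 := hdiff x hx y hy i.succ
    rw [b.orthonormal.inner_eq_zero (Fin.succ_ne_zero i), mul_zero, sub_zero] at a1
    exact a1
  rw [ENNReal.ofReal_mul (by positivity), ENNReal.ofReal_pow hD]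
  refine mul_le_mul' d0 ?_
  refine (Finset.prod_le_prod' (fun i _ => di i)).trans ?_
  simp

theorem ib_patch {n : ℕ} {Ω : Set (EuclideanSpace ℝ (Fin (n + 1)))} (hc : Convex ℝ Ω)
    {a δ D : ℝ} (ha : 0 < a) (hδ : 0 ≤ δ) (hD : 0 ≤ D) (t : Set (EuclideanSpace ℝ (Fin (n + 1))))
    (ht : ∀ y ∈ t, ∀ y' ∈ t, dist y y' ≤ D) :
    volume {x | a ≤ infDist x Ωᶜ ∧ infDist x Ωᶜ ≤ a + δ ∧
      ∃ y ∈ t, y ∉ Ω ∧ dist x y = infDist x Ωᶜ} ≤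
    ENNReal.ofReal ((δ + D * (1 + 4 * δ / a)) * (D * (1 + 4 * δ / a)) ^ n) := by
  set A := {x | a ≤ infDist x Ωᶜ ∧ infDist x Ωᶜ ≤ a + δ ∧
      ∃ y ∈ t, y ∉ Ω ∧ dist x y = infDist x Ωᶜ} with hA
  rcases A.eq_empty_or_nonempty with h | ⟨x0, hx0⟩
  · rw [h]; simp
  have hex : ∀ x ∈ A, ∃ z ν : EuclideanSpace ℝ (Fin (n + 1)), ‖ν‖ = 1 ∧
      x = z + (infDist x Ωᶜ - a) • ν ∧ z - a • ν ∈ t ∧ z - a • ν ∉ Ω ∧ ball z a ⊆ Ω := by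
    rintro x ⟨h1, h2, y, hyt, hyΩ, hd⟩
    set d := infDist x Ωᶜ with hdd
    have hd0 : 0 < d := by linarith
    have hn : ‖x - y‖ = d := by rw [← dist_eq_norm, hd]
    refine ⟨y + (a / d) • (x - y), (1 / d) • (x - y), ?_, ?_, ?_⟩
    · rw [norm_smul, hn, Real.norm_of_nonneg (by positivity)]
      field_simp
    · rw [smul_smul, add_assoc, ← add_smul]
      have : a / d + (d - a) * (1 / d) = 1 := by field_simp; ring
      rw [this, one_smul]; abel
    · have e : y + (a / d) • (x - y) - a • (1 / d) • (x - y) = y := by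
        rw [smul_smul, mul_one_div]; abel
      rw [e]
      refine ⟨hyt, hyΩ, ?_⟩
      refine Set.Subset.trans ?_ (ball_infDist_compl_subset (x := x))
      apply ball_subset_ball'
      rw [← hdd]
      have : dist (y + (a / d) • (x - y)) x = d - a := by
        have e2 : y + (a / d) • (x - y) - x = -((1 - a / d) • (x - y)) := by module
        rw [dist_eq_norm, e2, norm_neg, norm_smul, hn, Real.norm_of_nonneg]
        · field_simp
        · rw [sub_nonneg, div_le_one hd0]; exact h1
      linarith
  choose! z ν hν hx hyt hyΩ hb using hex
  have hzz : ∀ x ∈ A, ∀ x' ∈ A, dist (z x) (z x') ≤ D := by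
    intro x hxA x' hxA'
    refine le_trans ?_ (ht _ (hyt x hxA) _ (hyt x' hxA'))
    have key : ∀ x ∈ A, ∀ w ∈ {x | ball x a ⊆ Ω}, inner ℝ ((z x - a • ν x) - z x) (w - z x) ≤ 0 := by
      intro x hxA
      apply ib_proj (ib_inner_convex hc a) (hb x hxA)
      intro w hw
      have : dist (z x - a • ν x) (z x) = a := by
        rw [dist_eq_norm, sub_sub_cancel_left, norm_neg, norm_smul, hν x hxA,
          Real.norm_of_nonneg ha.le, mul_one]
      rw [this]
      by_contra! hlt
      exact hyΩ x hxA (hw (by rwa [mem_ball]))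
    exact ib_nonexp (key x hxA _ (hb x' hxA')) (key x' hxA' _ (hb x hxA))
  have hνν : ∀ x ∈ A, ‖ν x - ν x0‖ ≤ 2 * D / a := by
    intro x hxA
    have h1 := hzz x hxA x0 hx0
    have h2 := ht _ (hyt x hxA) _ (hyt x0 hx0)
    rw [dist_eq_norm] at h1 h2
    have e : a • (ν x - ν x0) = (z x - z x0) - ((z x - a • ν x) - (z x0 - a • ν x0)) := by module
    have h3 : a * ‖ν x - ν x0‖ ≤ D + D := by
      rw [← Real.norm_of_nonneg ha.le, ← norm_smul, e]
      exact (norm_sub_le _ _).trans (add_le_add h1 h2)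
    rw [le_div_iff₀ ha]; linarith
  apply ib_vol A (ν x0) (hν x0 hx0) (fun x => infDist x Ωᶜ - a) _ _ (by positivity) hδ
  · intro x hxA x' hxA'
    set s := infDist x Ωᶜ - a with hs
    set s' := infDist x' Ωᶜ - a with hs'
    have s0 : 0 ≤ s := by linarith [hxA.1]
    have s1 : s ≤ δ := by linarith [hxA.2.1]
    have s0' : 0 ≤ s' := by linarith [hxA'.1]
    have s1' : s' ≤ δ := by linarith [hxA'.2.1]
    have e : x - x' - (s - s') • ν x0 =
        (z x - z x') + s • (ν x - ν x0) - s' • (ν x' - ν x0) := by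
      have e1 := hx x hxA
      have e2 := hx x' hxA'
      rw [← hs] at e1
      rw [← hs'] at e2
      calc x - x' - (s - s') • ν x0 = (z x + s • ν x) - (z x' + s' • ν x') - (s - s') • ν x0 := by
            rw [← e1, ← e2]
        _ = _ := by module
    change ‖x - x' - (s - s') • ν x0‖ ≤ _
    rw [e]
    have n1 := hzz x hxA x' hxA'
    rw [dist_eq_norm] at n1
    have n2 : ‖s • (ν x - ν x0)‖ ≤ δ * (2 * D / a) := by
      rw [norm_smul, Real.norm_of_nonneg s0]
      exact mul_le_mul s1 (hνν x hxA) (norm_nonneg _) hδ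
    have n3 : ‖s' • (ν x' - ν x0)‖ ≤ δ * (2 * D / a) := by
      rw [norm_smul, Real.norm_of_nonneg s0']
      exact mul_le_mul s1' (hνν x' hxA') (norm_nonneg _) hδ
    have n4 := norm_sub_le ((z x - z x') + s • (ν x - ν x0)) (s' • (ν x' - ν x0))
    have n5 := norm_add_le (z x - z x') (s • (ν x - ν x0))
    have e4 : D * (1 + 4 * δ / a) = D + δ * (2 * D / a) + δ * (2 * D / a) := by ring
    rw [e4]; linarith
  · intro x hxA x' hxA'
    rw [abs_le]
    constructor <;> linarith [hxA.1, hxA.2.1, hxA'.1, hxA'.2.1]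

theorem ib_nearest {n : ℕ} {Ω : Set (EuclideanSpace ℝ (Fin (n + 1)))} (ho : IsOpen Ω)
    (hbd : Bornology.IsBounded Ω) (x : EuclideanSpace ℝ (Fin (n + 1))) (hx : 0 < infDist x Ωᶜ) :
    ∃ y ∈ frontier Ω, y ∉ Ω ∧ dist x y = infDist x Ωᶜ := by
  have hne : (Ωᶜ).Nonempty := by
    rw [Set.nonempty_compl]
    rintro rfl
    exact NormedSpace.unbounded_univ ℝ _ hbd
  obtain ⟨y, hy, hd⟩ := ho.isClosed_compl.exists_infDist_eq_dist hne x
  refine ⟨y, ?_, hy, hd.symm⟩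
  rw [ho.frontier_eq]
  refine ⟨?_, hy⟩
  have h1 := closure_mono (ball_infDist_compl_subset (s := Ω) (x := x))
  apply h1
  rw [closure_ball _ hx.ne', mem_closedBall, dist_comm, hd]

/-- volume of a thin band. -/
theorem ib_band {n : ℕ} {Ω : Set (EuclideanSpace ℝ (Fin (n + 1)))} (hc : Convex ℝ Ω)
    (ho : IsOpen Ω) (hbd : Bornology.IsBounded Ω) {a δ : ℝ} (ha : 0 < a) (hδ : 0 < δ)
    (hfin : μH[(n : ℝ)] (frontier Ω) ≠ ∞) :
    volume {x | a ≤ infDist x Ωᶜ ∧ infDist x Ωᶜ ≤ a + δ} ≤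
    ENNReal.ofReal (δ * (1 + 4 * δ / a) ^ n) * μH[(n : ℝ)] (frontier Ω) := by
  set c := 1 + 4 * δ / a with hcdef
  have hc0 : 0 < c := by positivity
  have step : ∀ ρ : ℝ, 0 < ρ → volume {x | a ≤ infDist x Ωᶜ ∧ infDist x Ωᶜ ≤ a + δ} ≤
      ENNReal.ofReal ((δ + ρ * c) * c ^ n) * μH[(n : ℝ)] (frontier Ω) := by
    intro ρ hρ
    have hC0 : ENNReal.ofReal ((δ + ρ * c) * c ^ n) ≠ 0 := by
      rw [Ne, ENNReal.ofReal_eq_zero, not_le]; positivity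
    rw [mul_comm, ← ENNReal.div_le_iff hC0 ENNReal.ofReal_ne_top, Measure.hausdorffMeasure_apply]
    refine le_trans ?_ (le_iSup₂ (ENNReal.ofReal ρ) (ENNReal.ofReal_pos.2 hρ))
    refine le_iInf fun t => le_iInf fun hcov => le_iInf fun hdiam => ?_
    apply ENNReal.div_le_of_le_mul
    rw [mul_comm, ← ENNReal.tsum_mul_left]
    have hsub : {x | a ≤ infDist x Ωᶜ ∧ infDist x Ωᶜ ≤ a + δ} ⊆
        ⋃ k, {x | a ≤ infDist x Ωᶜ ∧ infDist x Ωᶜ ≤ a + δ ∧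
          ∃ y ∈ t k, y ∉ Ω ∧ dist x y = infDist x Ωᶜ} := by
      rintro x ⟨h1, h2⟩
      obtain ⟨y, hyf, hy, hd⟩ := ib_nearest ho hbd x (by linarith)
      obtain ⟨k, hk⟩ := Set.mem_iUnion.1 (hcov hyf)
      exact Set.mem_iUnion.2 ⟨k, h1, h2, y, hk, hy, hd⟩
    refine (measure_mono hsub).trans ((measure_iUnion_le _).trans ?_)
    refine ENNReal.tsum_le_tsum fun k => ?_
    rcases (t k).eq_empty_or_nonempty with hk | hk
    · rw [hk]; simp
    have hfink : ediam (t k) ≠ ∞ := ((hdiam k).trans_lt ENNReal.ofReal_lt_top).ne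
    have hDρ : diam (t k) ≤ ρ := ENNReal.toReal_le_of_le_ofReal hρ.le (hdiam k)
    have hbk : Bornology.IsBounded (t k) := isBounded_iff_ediam_ne_top.2 hfink
    refine (ib_patch hc ha hδ.le diam_nonneg (t k)
      (fun y hy y' hy' => dist_le_diam_of_mem hbk hy hy')).trans ?_
    rw [← hcdef, iSup_pos hk, ENNReal.rpow_natCast]
    have : ediam (t k) = ENNReal.ofReal (diam (t k)) := (ENNReal.ofReal_toReal hfink).symm
    rw [this, ← ENNReal.ofReal_pow diam_nonneg, ← ENNReal.ofReal_mul (by positivity)]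
    apply ENNReal.ofReal_le_ofReal
    rw [mul_pow]
    have hp : 0 ≤ diam (t k) ^ n * c ^ n := mul_nonneg (pow_nonneg diam_nonneg _) (by positivity)
    have : δ + diam (t k) * c ≤ δ + ρ * c := by gcongr
    calc _ ≤ (δ + ρ * c) * (diam (t k) ^ n * c ^ n) := mul_le_mul_of_nonneg_right this hp
      _ = _ := by ring
  have hlim : Tendsto (fun ρ : ℝ => ENNReal.ofReal ((δ + ρ * c) * c ^ n) * μH[(n : ℝ)] (frontier Ω))
      (𝓝[>] 0) (𝓝 (ENNReal.ofReal ((δ + 0 * c) * c ^ n) * μH[(n : ℝ)] (frontier Ω))) := by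
    apply ENNReal.Tendsto.mul_const _ (Or.inr hfin)
    apply ENNReal.tendsto_ofReal
    apply tendsto_nhdsWithin_of_tendsto_nhds
    apply Continuous.tendsto
    fun_prop
  rw [zero_mul, add_zero] at hlim
  exact ge_of_tendsto hlim (by filter_upwards [self_mem_nhdsWithin] with ρ hρ using step ρ hρ)

/-- volume of a boundary layer. -/
theorem ib_layer {n : ℕ} {Ω : Set (EuclideanSpace ℝ (Fin (n + 1)))} (hc : Convex ℝ Ω)
    (ho : IsOpen Ω) (hbd : Bornology.IsBounded Ω) {b : ℝ} (hb : 0 < b)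
    (hfin : μH[(n : ℝ)] (frontier Ω) ≠ ∞) :
    volume {x | 0 < infDist x Ωᶜ ∧ infDist x Ωᶜ ≤ b} ≤
    ENNReal.ofReal b * μH[(n : ℝ)] (frontier Ω) := by
  have step : ∀ q : ℝ, 0 < q → q < 1 → volume {x | 0 < infDist x Ωᶜ ∧ infDist x Ωᶜ ≤ b} ≤
      ENNReal.ofReal (b * (1 + 4 * (1 - q) / q) ^ n) * μH[(n : ℝ)] (frontier Ω) := by
    intro q hq hq1
    have hq1' : 0 < 1 - q := by linarith
    have hsub : {x | 0 < infDist x Ωᶜ ∧ infDist x Ωᶜ ≤ b} ⊆ ⋃ k : ℕ,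
        {x | b * q ^ (k + 1) ≤ infDist x Ωᶜ ∧
          infDist x Ωᶜ ≤ b * q ^ (k + 1) + b * q ^ k * (1 - q)} := by
      rintro x ⟨h1, h2⟩
      obtain ⟨k, hk1, hk2⟩ := exists_nat_pow_near_of_lt_one (div_pos h1 hb)
        ((div_le_one hb).2 h2) hq hq1
      rw [lt_div_iff₀ hb] at hk1
      rw [div_le_iff₀ hb] at hk2
      refine Set.mem_iUnion.2 ⟨k, by linarith, ?_⟩
      have : b * q ^ (k + 1) + b * q ^ k * (1 - q) = q ^ k * b := by ring
      rw [this]; exact hk2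
    refine (measure_mono hsub).trans ((measure_iUnion_le _).trans ?_)
    have hk : ∀ k : ℕ, volume {x | b * q ^ (k + 1) ≤ infDist x Ωᶜ ∧
          infDist x Ωᶜ ≤ b * q ^ (k + 1) + b * q ^ k * (1 - q)} ≤
        ENNReal.ofReal (b * (1 + 4 * (1 - q) / q) ^ n * ((1 - q) * q ^ k)) *
          μH[(n : ℝ)] (frontier Ω) := by
      intro k
      refine (ib_band hc ho hbd (a := b * q ^ (k + 1)) (δ := b * q ^ k * (1 - q))
        (by positivity) (by positivity) hfin).trans (le_of_eq ?_)
      have : 4 * (b * q ^ k * (1 - q)) / (b * q ^ (k + 1)) = 4 * (1 - q) / q := by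
        field_simp
        ring
      rw [this]
      congr 2
      ring
    refine (ENNReal.tsum_le_tsum hk).trans (le_of_eq ?_)
    rw [ENNReal.tsum_mul_right]
    have hs : HasSum (fun k : ℕ => b * (1 + 4 * (1 - q) / q) ^ n * ((1 - q) * q ^ k))
        (b * (1 + 4 * (1 - q) / q) ^ n * ((1 - q) * (1 - q)⁻¹)) :=
      ((hasSum_geometric_of_lt_one hq.le hq1).mul_left _).mul_left _
    rw [← ENNReal.ofReal_tsum_of_nonneg (fun k => by positivity) hs.summable, hs.tsum_eq,
      mul_inv_cancel₀ hq1'.ne', mul_one]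
  have hlim : Tendsto (fun q : ℝ => ENNReal.ofReal (b * (1 + 4 * (1 - q) / q) ^ n) *
      μH[(n : ℝ)] (frontier Ω)) (𝓝[<] 1)
      (𝓝 (ENNReal.ofReal (b * (1 + 4 * (1 - 1) / 1) ^ n) * μH[(n : ℝ)] (frontier Ω))) := by
    apply ENNReal.Tendsto.mul_const _ (Or.inr hfin)
    apply ENNReal.tendsto_ofReal
    apply tendsto_nhdsWithin_of_tendsto_nhds
    apply ContinuousAt.tendsto (f := fun q : ℝ => b * (1 + 4 * (1 - q) / q) ^ n)
    fun_prop (disch := norm_num)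
  simp only [sub_self, mul_zero, zero_div, add_zero, one_pow, mul_one] at hlim
  refine ge_of_tendsto hlim ?_
  have : Set.Ioo (0 : ℝ) 1 ∈ 𝓝[<] (1 : ℝ) := Ioo_mem_nhdsLT (by norm_num)
  filter_upwards [this] with q hq using step q hq.1 hq.2

/-- Boundary measure of an inner parallel set is strictly smaller. -/
theorem ib_inner {n : ℕ} (hn : 1 ≤ n) {Ω : Set (EuclideanSpace ℝ (Fin (n + 1)))} (hc : Convex ℝ Ω)
    (hbd : Bornology.IsBounded Ω) {τ : ℝ} (hτ : 0 < τ) :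
    Convex ℝ {x | τ < infDist x Ωᶜ} ∧ ∃ lam : ℝ, 0 < lam ∧ lam < 1 ∧ μH[(n : ℝ)] (frontier {x | τ < infDist x Ωᶜ}) ≤
      ENNReal.ofReal lam * μH[(n : ℝ)] (frontier Ω) := by
  obtain ⟨M, hM0, hM⟩ := hbd.exists_pos_norm_le
  set c := 1 + τ / M with hcd
  have hc1 : 1 < c := by
    have : 0 < τ / M := by positivity
    linarith
  have hc0 : 0 < c := by linarith
  have hconv : Convex ℝ {x | τ < infDist x Ωᶜ} := by
    intro x hx y hy s t hs ht hst
    have hm : τ < min (infDist x Ωᶜ) (infDist y Ωᶜ) := lt_min hx hy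
    set r := min (infDist x Ωᶜ) (infDist y Ωᶜ)
    have h1 := ib_inner_convex hc r (x := x)
      ((ball_subset_ball (min_le_left _ _)).trans ball_infDist_compl_subset)
      (y := y) ((ball_subset_ball (min_le_right _ _)).trans ball_infDist_compl_subset) hs ht hst
    have hne : (Ωᶜ).Nonempty := by
      rw [Set.nonempty_compl]
      rintro rfl
      exact NormedSpace.unbounded_univ ℝ _ hbd
    refine lt_of_lt_of_le hm ?_
    rw [le_infDist hne]
    intro w hw
    by_contra! hlt
    exact hw (h1 (by rwa [mem_ball, dist_comm]))
  refine ⟨hconv, ?_⟩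
  refine ⟨(c⁻¹) ^ n, by positivity, pow_lt_one₀ (by positivity) (inv_lt_one_of_one_lt₀ hc1)
    (by omega), ?_⟩
  have hop : IsOpen {x | τ < infDist x Ωᶜ} := isOpen_lt continuous_const (continuous_infDist_pt _)
  let L : Set (EuclideanSpace ℝ (Fin (n + 1))) := (fun x => c⁻¹ • x) '' Ω
  have hLb : Bornology.IsBounded L := by
    rw [isBounded_iff_forall_norm_le]
    refine ⟨c⁻¹ * M, ?_⟩
    rintro _ ⟨x, hx, rfl⟩
    rw [norm_smul, Real.norm_of_nonneg (by positivity)]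
    exact mul_le_mul_of_nonneg_left (hM x hx) (by positivity)
  have hsub : {x | τ < infDist x Ωᶜ} ⊆ L := by
    intro x hx
    have hx' : τ < infDist x Ωᶜ := hx
    refine ⟨c • x, ?_, ?_⟩
    · have hxΩ : x ∈ Ω := ball_infDist_compl_subset (mem_ball_self (hτ.trans hx'))
      apply ball_infDist_compl_subset (x := x)
      rw [mem_ball, dist_eq_norm]
      have e : c • x - x = (τ / M) • x := by rw [hcd]; module
      rw [e, norm_smul, Real.norm_of_nonneg (by positivity)]
      refine lt_of_le_of_lt ?_ hx'
      calc τ / M * ‖x‖ ≤ τ / M * M := mul_le_mul_of_nonneg_left (hM x hxΩ) (by positivity)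
        _ = τ := by field_simp
    · simp only [smul_smul, inv_mul_cancel₀ hc0.ne', one_smul]
  refine (ib_mono hconv hop hLb hsub (Nat.cast_nonneg n)).trans (le_of_eq ?_)
  have hfr : frontier L = c⁻¹ • frontier Ω := by
    have := (Homeomorph.smulOfNeZero (α := EuclideanSpace ℝ (Fin (n + 1))) c⁻¹
      (inv_ne_zero hc0.ne')).image_frontier Ω
    exact this.symm
  rw [hfr, Measure.hausdorffMeasure_smul₀ (Nat.cast_nonneg n) (inv_ne_zero hc0.ne')]
  rw [ENNReal.smul_def, smul_eq_mul, NNReal.rpow_natCast]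
  congr 1
  rw [ENNReal.ofReal_pow (by positivity), ENNReal.coe_pow]
  congr 1
  rw [← enorm_eq_nnnorm, Real.enorm_of_nonneg (by positivity)]


theorem ib_core {n : ℕ} (hn : 1 ≤ n) {Ω : Set (EuclideanSpace ℝ (Fin (n + 1)))} (hc : Convex ℝ Ω)
    (ho : IsOpen Ω) (hbd : Bornology.IsBounded Ω) (hfin : μH[(n : ℝ)] (frontier Ω) ≠ ∞)
    {m r : ℝ} (hm : 0 < m) (hvol : volume Ω = ENNReal.ofReal m) (hr : 0 < r)
    (hin : ∀ x s, 0 < s → ball x s ⊆ Ω → s ≤ r) :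
    0 < (μH[(n : ℝ)] (frontier Ω)).toReal ∧ m < r * (μH[(n : ℝ)] (frontier Ω)).toReal := by
  have hne : (Ωᶜ).Nonempty := by
    rw [Set.nonempty_compl]
    rintro rfl
    exact NormedSpace.unbounded_univ ℝ _ hbd
  set τ := r / 2 with hτd
  have hτ : 0 < τ := by positivity
  obtain ⟨hconv, lam, hl0, hl1, hle⟩ := ib_inner hn hc hbd hτ
  set Ω' := {x | τ < infDist x Ωᶜ} with hΩ'
  have hop : IsOpen Ω' := isOpen_lt continuous_const (continuous_infDist_pt _)
  have hpos : ∀ x ∈ Ω, 0 < infDist x Ωᶜ := by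
    intro x hx
    rw [← ho.isClosed_compl.notMem_iff_infDist_pos hne]
    simpa using hx
  have hsubΩ : Ω' ⊆ Ω := fun x hx =>
    ball_infDist_compl_subset (mem_ball_self (hτ.trans hx))
  have hbd' : Bornology.IsBounded Ω' := hbd.subset hsubΩ
  have hne' : (Ω'ᶜ).Nonempty := hne.mono (Set.compl_subset_compl.2 hsubΩ)
  have hfin' : μH[(n : ℝ)] (frontier Ω') ≠ ∞ :=
    (hle.trans_lt (ENNReal.mul_lt_top ENNReal.ofReal_lt_top hfin.lt_top)).ne
  have hcov : Ω ⊆ {x | 0 < infDist x Ωᶜ ∧ infDist x Ωᶜ ≤ τ} ∪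
      {x | 0 < infDist x Ω'ᶜ ∧ infDist x Ω'ᶜ ≤ r - τ} := by
    intro x hx
    by_cases hxτ : infDist x Ωᶜ ≤ τ
    · exact Or.inl ⟨hpos x hx, hxτ⟩
    right
    push Not at hxτ
    have hx' : x ∈ Ω' := hxτ
    refine ⟨?_, ?_⟩
    · rw [← hop.isClosed_compl.notMem_iff_infDist_pos hne']
      simpa using hx'
    obtain ⟨y, hyf, hy, hd⟩ := ib_nearest ho hbd x (hpos x hx)
    set d := infDist x Ωᶜ with hdd
    have hd0 : 0 < d := hτ.trans hxτ
    have hdr : d ≤ r := hin x d hd0 ball_infDist_compl_subset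
    have hnorm : ‖y - x‖ = d := by rw [← dist_eq_norm, dist_comm, hd]
    have hz : x + ((d - τ) / d) • (y - x) ∈ Ω'ᶜ := by
      intro hz
      have h1 : τ < infDist (x + ((d - τ) / d) • (y - x)) Ωᶜ := hz
      have h2 := infDist_le_dist_of_mem (x := x + ((d - τ) / d) • (y - x))
        (show y ∈ Ωᶜ from hy)
      have e : x + ((d - τ) / d) • (y - x) - y = -((τ / d) • (y - x)) := by
        have : (d - τ) / d = 1 - τ / d := by field_simp
        rw [this]; module
      rw [dist_eq_norm, e, norm_neg, norm_smul, hnorm, Real.norm_of_nonneg (by positivity),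
        div_mul_cancel₀ _ hd0.ne'] at h2
      linarith
    have h3 := infDist_le_dist_of_mem (x := x) hz
    have h4 : 0 ≤ (d - τ) / d := div_nonneg (by linarith) hd0.le
    rw [dist_eq_norm, sub_add_cancel_left, norm_neg, norm_smul, hnorm,
      Real.norm_of_nonneg h4, div_mul_cancel₀ _ hd0.ne'] at h3
    linarith
  have hrτ : r - τ = τ := by rw [hτd]; ring
  rw [hrτ] at hcov
  set H := μH[(n : ℝ)] (frontier Ω) with hH
  have hmain : ENNReal.ofReal m ≤ ENNReal.ofReal (τ * H.toReal + τ * (lam * H.toReal)) := by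
    rw [← hvol]
    refine (measure_mono hcov).trans ((measure_union_le _ _).trans ?_)
    have h1 := ib_layer hc ho hbd hτ hfin
    have h2 := (ib_layer hconv hop hbd' hτ hfin').trans (mul_le_mul_right hle _)
    rw [ENNReal.ofReal_add (by positivity) (by positivity), ENNReal.ofReal_mul hτ.le,
      ENNReal.ofReal_mul hτ.le, ENNReal.ofReal_mul hl0.le, ENNReal.ofReal_toReal hfin]
    exact add_le_add h1 h2
  rw [ENNReal.ofReal_le_ofReal_iff (by positivity)] at hmain
  have hHpos : 0 < H.toReal := by
    rcases (ENNReal.toReal_nonneg (a := H)).eq_or_lt with h | h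
    · rw [← h] at hmain
      simp at hmain
      linarith
    · exact h
  refine ⟨hHpos, ?_⟩
  have h5 : τ * (lam * H.toReal) < τ * H.toReal := by
    apply mul_lt_mul_of_pos_left _ hτ
    nlinarith
  have : r * H.toReal = τ * H.toReal + τ * H.toReal := by rw [hτd]; ring
  linarith

end Helpers

/-- An open convex subset `Ω` of a compact convex set `D ⊆ ℝ^N` (`N ≥ 2`) with
`ℋ^{N-1}(∂D) = S` and `|Ω| = m > 0` contains an open ball of radius `m/S`; indeed its
inradius is strictly greater than `|Ω| / ℋ^{N-1}(∂Ω) ≥ m/S`. -/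
theorem inner_ball_of_convex_subset {N : ℕ} (hN : 2 ≤ N)
    (D : Set (EuclideanSpace ℝ (Fin N))) (hD : IsCompact D) (hDc : Convex ℝ D)
    (S : ℝ) (hS : μH[(N : ℝ) - 1] (frontier D) = ENNReal.ofReal S)
    (Ω : Set (EuclideanSpace ℝ (Fin N))) (hΩD : Ω ⊆ D)
    (ho : IsOpen Ω) (hc : Convex ℝ Ω)
    (m : ℝ) (hm : 0 < m) (hvol : volume Ω = ENNReal.ofReal m) :
    (∃ x, Metric.ball x (m / S) ⊆ Ω) ∧
    m / S ≤ (volume Ω).toReal / (μH[(N : ℝ) - 1] (frontier Ω)).toReal ∧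
    (volume Ω).toReal / (μH[(N : ℝ) - 1] (frontier Ω)).toReal <
      sSup {r : ℝ | 0 < r ∧ ∃ x, Metric.ball x r ⊆ Ω} := by
  obtain ⟨n, rfl⟩ : ∃ n, N = n + 1 := ⟨N - 1, by omega⟩
  have hn : 1 ≤ n := by omega
  have hcast : ((n + 1 : ℕ) : ℝ) - 1 = (n : ℝ) := by push_cast; ring
  rw [hcast] at hS ⊢
  have hbd : Bornology.IsBounded Ω := hD.isBounded.subset hΩD
  have hmono : μH[(n : ℝ)] (frontier Ω) ≤ ENNReal.ofReal S := by
    rw [← hS]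
    exact ib_mono hc ho hD.isBounded hΩD (Nat.cast_nonneg n)
  have hfin : μH[(n : ℝ)] (frontier Ω) ≠ ⊤ := (hmono.trans_lt ENNReal.ofReal_lt_top).ne
  set T := {r : ℝ | 0 < r ∧ ∃ x, Metric.ball x r ⊆ Ω} with hT
  have hTb : BddAbove T := by
    refine ⟨diam Ω, ?_⟩
    rintro r ⟨hr, x, hx⟩
    obtain ⟨v, hv⟩ : ∃ v : EuclideanSpace ℝ (Fin (n + 1)), ‖v‖ = 1 := exists_norm_eq _ zero_le_one
    have key : ∀ s : ℝ, 0 < s → s < r → s ≤ diam Ω := by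
      intro s hs hsr
      have h1 : x + s • v ∈ Ω := hx (by
        rw [mem_ball, dist_eq_norm, add_sub_cancel_left, norm_smul, hv,
          Real.norm_of_nonneg hs.le]; linarith)
      have h2 := dist_le_diam_of_mem hbd h1 (hx (mem_ball_self hr))
      rwa [dist_eq_norm, add_sub_cancel_left, norm_smul, hv,
          Real.norm_of_nonneg hs.le, mul_one] at h2
    by_contra! hlt
    obtain ⟨s, hs1, hs2⟩ := exists_between (max_lt hlt hr)
    have := key s ((le_max_right _ _).trans_lt hs1) hs2
    linarith [(le_max_left (diam Ω) 0).trans_lt hs1]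
  have hΩne : Ω.Nonempty := by
    rw [Set.nonempty_iff_ne_empty]
    rintro rfl
    rw [measure_empty] at hvol
    exact absurd (ENNReal.ofReal_eq_zero.1 hvol.symm) (not_le.2 hm)
  obtain ⟨x0, hx0⟩ := hΩne
  obtain ⟨ε, hε, hεb⟩ := Metric.isOpen_iff.1 ho x0 hx0
  have hεT : ε ∈ T := ⟨hε, x0, hεb⟩
  have hr : 0 < sSup T := lt_of_lt_of_le hε (le_csSup hTb hεT)
  obtain ⟨hHpos, hlt⟩ := ib_core hn hc ho hbd hfin hm hvol hr
    (fun x s hs hb => le_csSup hTb ⟨hs, x, hb⟩)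
  have hSpos : 0 < S := by
    by_contra! hS0
    rw [ENNReal.ofReal_of_nonpos hS0, nonpos_iff_eq_zero] at hmono
    rw [hmono] at hHpos
    simp at hHpos
  have hHS : (μH[(n : ℝ)] (frontier Ω)).toReal ≤ S := ENNReal.toReal_le_of_le_ofReal hSpos.le hmono
  have hv : (volume Ω).toReal = m := by rw [hvol, ENNReal.toReal_ofReal hm.le]
  rw [hv]
  have c2 : m / S ≤ m / (μH[(n : ℝ)] (frontier Ω)).toReal :=
    div_le_div_of_nonneg_left hm.le hHpos hHS
  have c3 : m / (μH[(n : ℝ)] (frontier Ω)).toReal < sSup T := by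
    rw [div_lt_iff₀ hHpos]; exact hlt
  refine ⟨?_, c2, c3⟩
  obtain ⟨s, ⟨hs0, x, hx⟩, hs⟩ := exists_lt_of_lt_csSup ⟨ε, hεT⟩ (c2.trans_lt c3)
  exact ⟨x, (ball_subset_ball hs.le).trans hx⟩
end
end

section
/- Let D ⊆ ℝ^N (N ≥ 2) be compact, m > 0 with C_m(D) nonempty, and let (a_ij) be a constant symmetric positive definite N×N real matrix. For Ω ∈ C_m(D) and k ≥ 1, define λ_k(Ω) = inf over all k-dimensional linear subspaces V of C_c^∞(Ω) of sup over nonzero u ∈ V of ( ∫_Ω Σ_{i,j} a_ij ∂u/∂x_i ∂u/∂x_j dx ) / ( ∫_Ω u² dx ). Then for every k ≥ 1 the functional λ_k : C_m(D) → ℝ is bounded (there are constants 0 < c ≤ C < ∞ with c ≤ λ_k(Ω) ≤ C for all Ω ∈ C_m(D)) and continuous with respect to uniform convergence: if Ω_n → Ω uniformly in C_m(D), then λ_k(Ω_n) → λ_k(Ω). -/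
open MeasureTheory Metric Filter Topology

noncomputable section

/-- Uniform (Hausdorff) convergence of a sequence of sets. -/
def UnifConvTo {N : ℕ} (Ω : ℕ → Set (EuclideanSpace ℝ (Fin N)))
    (L : Set (EuclideanSpace ℝ (Fin N))) : Prop :=
  ∀ ε > (0 : ℝ), ∀ᶠ n in Filter.atTop,
    Ω n ⊆ Metric.thickening ε L ∧ L ⊆ Metric.thickening ε (Ω n)

/-- `Ω` belongs to the class `C_m(D)`: open convex subset of `D` of volume `m`. -/
def InCm {N : ℕ} (D : Set (EuclideanSpace ℝ (Fin N))) (m : ℝ)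
    (Ω : Set (EuclideanSpace ℝ (Fin N))) : Prop :=
  Ω ⊆ D ∧ IsOpen Ω ∧ Convex ℝ Ω ∧ volume Ω = ENNReal.ofReal m

/-- The Rayleigh quotient on `Ω` of the constant-coefficient operator `-∂_i(a_ij ∂_j ·)`. -/
def rayleighQuot {N : ℕ} (A : Matrix (Fin N) (Fin N) ℝ)
    (Ω : Set (EuclideanSpace ℝ (Fin N))) (u : EuclideanSpace ℝ (Fin N) → ℝ) : ℝ :=
  (∫ x in Ω, ∑ i, ∑ j, A i j *
      fderiv ℝ u x (EuclideanSpace.single i (1 : ℝ)) *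
      fderiv ℝ u x (EuclideanSpace.single j (1 : ℝ))) /
  (∫ x in Ω, u x ^ 2)

/-- The `k`-th Dirichlet eigenvalue of `-∂_i(a_ij ∂_j ·)` on `Ω`, via Courant–Fischer
min-max over `k`-dimensional subspaces of test functions. -/
def lamk {N : ℕ} (A : Matrix (Fin N) (Fin N) ℝ)
    (Ω : Set (EuclideanSpace ℝ (Fin N))) (k : ℕ) : ℝ :=
  sInf {μ : ℝ | ∃ V : Submodule ℝ (EuclideanSpace ℝ (Fin N) → ℝ),
    Module.finrank ℝ V = k ∧
    (∀ u ∈ V, ContDiff ℝ (⊤ : ℕ∞) u ∧ HasCompactSupport u ∧ tsupport u ⊆ Ω) ∧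
    μ = sSup {q : ℝ | ∃ u ∈ V, u ≠ 0 ∧ q = rayleighQuot A Ω u}}

theorem bilin_bound_inner {V : Type*} [NormedAddCommGroup V] [InnerProductSpace ℝ V]
    [FiniteDimensional ℝ V] (B : V →ₗ[ℝ] V →ₗ[ℝ] ℝ) :
    ∃ C : ℝ, 0 < C ∧ ∀ u, B u u ≤ C * inner ℝ u u := by
  let Bc : V →ₗ[ℝ] (V →L[ℝ] ℝ) :=
    (LinearMap.toContinuousLinearMap (𝕜 := ℝ) (E := V) (F' := ℝ)).toLinearMap ∘ₗ B
  let Bcc : V →L[ℝ] (V →L[ℝ] ℝ) := LinearMap.toContinuousLinearMap Bc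
  refine ⟨‖Bcc‖ + 1, by positivity, fun u => ?_⟩
  have h1 : B u u ≤ ‖Bcc‖ * ‖u‖ * ‖u‖ := by
    have := Bcc.le_opNorm₂ u u
    have h2 : Bcc u u = B u u := rfl
    rw [h2] at this
    exact (le_abs_self _).trans this
  rw [real_inner_self_eq_norm_mul_norm]
  nlinarith [norm_nonneg u]

theorem bilin_bound {V : Type*} [AddCommGroup V] [Module ℝ V] [FiniteDimensional ℝ V]
    (B G : V →ₗ[ℝ] V →ₗ[ℝ] ℝ) (hs : ∀ u v, G u v = G v u) (hp : ∀ u, u ≠ 0 → 0 < G u u) :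
    ∃ C : ℝ, 0 < C ∧ ∀ u, B u u ≤ C * G u u := by
  have hnn : ∀ u, 0 ≤ G u u := fun u => by
    by_cases h : u = 0
    · simp [h]
    · exact (hp u h).le
  let core : InnerProductSpace.Core ℝ V :=
    { inner := fun u v => G u v
      conj_inner_symm := fun u v => by simpa using hs v u
      re_inner_nonneg := fun u => by simpa using hnn u
      add_left := fun u v w => by simp
      smul_left := fun u v r => by simp
      definite := fun u hu => by
        by_contra h
        exact (hp u h).ne' hu }
  obtain ⟨C, hC, h⟩ := @bilin_bound_inner V core.toNormedAddCommGroup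
    (InnerProductSpace.ofCore core.toCore) _ B
  exact ⟨C, hC, fun u => h u⟩

/-- Energy density. -/
def enDens {N : ℕ} (A : Matrix (Fin N) (Fin N) ℝ) (u v : EuclideanSpace ℝ (Fin N) → ℝ)
    (x : EuclideanSpace ℝ (Fin N)) : ℝ :=
  ∑ i, ∑ j, A i j * fderiv ℝ u x (EuclideanSpace.single i (1 : ℝ)) *
      fderiv ℝ v x (EuclideanSpace.single j (1 : ℝ))

theorem pd_integrable {N : ℕ} {u v : EuclideanSpace ℝ (Fin N) → ℝ}
    (hu : ContDiff ℝ (⊤ : ℕ∞) u) (hv : ContDiff ℝ (⊤ : ℕ∞) v) (hc : HasCompactSupport u)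
    (a b : EuclideanSpace ℝ (Fin N)) :
    Integrable (fun x => fderiv ℝ u x a * fderiv ℝ v x b) := by
  have h1 : Continuous (fun x => fderiv ℝ u x a) :=
    (hu.continuous_fderiv (by simp)).clm_apply continuous_const
  have h2 : Continuous (fun x => fderiv ℝ v x b) :=
    (hv.continuous_fderiv (by simp)).clm_apply continuous_const
  exact (h1.mul h2).integrable_of_hasCompactSupport ((hc.fderiv_apply ℝ a).mul_right)

theorem enDens_integrable {N : ℕ} (A : Matrix (Fin N) (Fin N) ℝ) {u v : EuclideanSpace ℝ (Fin N) → ℝ}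
    (hu : ContDiff ℝ (⊤ : ℕ∞) u) (hv : ContDiff ℝ (⊤ : ℕ∞) v) (hc : HasCompactSupport u) :
    Integrable (enDens A u v) := by
  unfold enDens
  refine integrable_finsetSum _ fun i _ => integrable_finsetSum _ fun j _ => ?_
  simp only [mul_assoc]
  exact (pd_integrable hu hv hc _ _).const_mul _

theorem rayleigh_eq {N : ℕ} (A : Matrix (Fin N) (Fin N) ℝ) {Ω : Set (EuclideanSpace ℝ (Fin N))}
    {u : EuclideanSpace ℝ (Fin N) → ℝ} (hs : tsupport u ⊆ Ω) :
    rayleighQuot A Ω u = (∫ x, enDens A u u x) / ∫ x, u x ^ 2 := by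
  unfold rayleighQuot
  congr 1
  · apply setIntegral_eq_integral_of_forall_compl_eq_zero
    intro x hx
    have : fderiv ℝ u x = 0 := fderiv_of_notMem_tsupport (𝕜 := ℝ) (fun h => hx (hs h))
    simp [this]
  · apply setIntegral_eq_integral_of_forall_compl_eq_zero
    intro x hx
    have : u x = 0 := image_eq_zero_of_notMem_tsupport (fun h => hx (hs h))
    simp [this]

theorem mul_int {N : ℕ} {u v : EuclideanSpace ℝ (Fin N) → ℝ}
    (hu : ContDiff ℝ (⊤ : ℕ∞) u) (hv : ContDiff ℝ (⊤ : ℕ∞) v) (hc : HasCompactSupport u) :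
    Integrable (fun x => u x * v x) :=
  (hu.continuous.mul hv.continuous).integrable_of_hasCompactSupport hc.mul_right

theorem sq_int_pos {N : ℕ} {u : EuclideanSpace ℝ (Fin N) → ℝ}
    (hu : ContDiff ℝ (⊤ : ℕ∞) u) (hc : HasCompactSupport u) (h0 : u ≠ 0) :
    0 < ∫ x, u x * u x := by
  obtain ⟨x, hx⟩ := Function.ne_iff.1 h0
  exact (hu.continuous.mul hu.continuous).integral_pos_of_hasCompactSupport_nonneg_nonzero
    hc.mul_right (fun x => mul_self_nonneg _) (x := x) (by simpa using hx)

theorem rq_bddAbove {N : ℕ} (A : Matrix (Fin N) (Fin N) ℝ) {Ω : Set (EuclideanSpace ℝ (Fin N))}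
    (V : Submodule ℝ (EuclideanSpace ℝ (Fin N) → ℝ)) [FiniteDimensional ℝ V]
    (hV : ∀ u ∈ V, ContDiff ℝ (⊤ : ℕ∞) u ∧ HasCompactSupport u ∧ tsupport u ⊆ Ω) :
    BddAbove {q : ℝ | ∃ u ∈ V, u ≠ 0 ∧ q = rayleighQuot A Ω u} := by
  have hI : ∀ u v : V, Integrable (enDens A u v) := fun u v =>
    enDens_integrable A (hV u u.2).1 (hV v v.2).1 (hV u u.2).2.1
  have hM : ∀ u v : V, Integrable (fun x => u.1 x * v.1 x) := fun u v =>
    mul_int (hV u u.2).1 (hV v v.2).1 (hV u u.2).2.1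
  have hd : ∀ (u : V) x, DifferentiableAt ℝ u.1 x := fun u x =>
    (hV u u.2).1.differentiable (by simp) x
  let B : V →ₗ[ℝ] V →ₗ[ℝ] ℝ := LinearMap.mk₂ ℝ (fun u v => ∫ x, enDens A u v x)
    (fun u v w => by
      rw [← integral_add (hI _ _) (hI _ _)]
      congr 1; ext x
      simp only [enDens, ← Finset.sum_add_distrib, Submodule.coe_add]
      rw [fderiv_add (hd u x) (hd v x)]
      simp only [_root_.add_apply]
      refine Finset.sum_congr rfl fun i _ => Finset.sum_congr rfl fun j _ => by ring)
    (fun c u v => by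
      rw [smul_eq_mul, ← integral_const_mul]
      congr 1; ext x
      simp only [enDens, Finset.mul_sum, Submodule.coe_smul]
      rw [fderiv_const_smul (hd u x)]
      simp only [_root_.smul_apply, smul_eq_mul]
      refine Finset.sum_congr rfl fun i _ => Finset.sum_congr rfl fun j _ => by ring)
    (fun w u v => by
      rw [← integral_add (hI _ _) (hI _ _)]
      congr 1; ext x
      simp only [enDens, ← Finset.sum_add_distrib, Submodule.coe_add]
      rw [fderiv_add (hd u x) (hd v x)]
      simp only [_root_.add_apply]
      refine Finset.sum_congr rfl fun i _ => Finset.sum_congr rfl fun j _ => by ring)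
    (fun c u v => by
      rw [smul_eq_mul, ← integral_const_mul]
      congr 1; ext x
      simp only [enDens, Finset.mul_sum, Submodule.coe_smul]
      rw [fderiv_const_smul (hd v x)]
      simp only [_root_.smul_apply, smul_eq_mul]
      refine Finset.sum_congr rfl fun i _ => Finset.sum_congr rfl fun j _ => by ring)
  let G : V →ₗ[ℝ] V →ₗ[ℝ] ℝ := LinearMap.mk₂ ℝ (fun u v => ∫ x, u.1 x * v.1 x)
    (fun u v w => by
      rw [← integral_add (hM _ _) (hM _ _)]
      congr 1; ext x
      simp; ring)
    (fun c u v => by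
      rw [smul_eq_mul, ← integral_const_mul]
      congr 1; ext x
      simp; ring)
    (fun w u v => by
      rw [← integral_add (hM _ _) (hM _ _)]
      congr 1; ext x
      simp; ring)
    (fun c u v => by
      rw [smul_eq_mul, ← integral_const_mul]
      congr 1; ext x
      simp; ring)
  have hpos : ∀ u : V, u ≠ 0 → 0 < G u u := fun u hu =>
    sq_int_pos (hV u u.2).1 (hV u u.2).2.1 (fun h => hu (Subtype.ext h))
  obtain ⟨C, _, hC⟩ := bilin_bound B G
    (fun u v => by simp only [G, LinearMap.mk₂_apply]; congr 1; ext x; ring) hpos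
  refine ⟨C, ?_⟩
  rintro q ⟨u, hu, h0, rfl⟩
  rw [rayleigh_eq A (hV u hu).2.2]
  have h1 := hC ⟨u, hu⟩
  have h2 := hpos ⟨u, hu⟩ (fun h => h0 (congrArg Subtype.val h))
  simp only [B, G, LinearMap.mk₂_apply] at h1 h2
  simp only [pow_two]
  rwa [div_le_iff₀ h2]

theorem posdef_bound {N : ℕ} (A : Matrix (Fin N) (Fin N) ℝ) (hA : A.PosDef) :
    ∃ C : ℝ, 0 < C ∧ ∀ ξ : Fin N → ℝ, ∑ i, ξ i * ξ i ≤ C * ∑ i, ∑ j, A i j * ξ i * ξ j := by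
  have hG : ∀ u v : Fin N → ℝ, Matrix.toBilin' A u v = ∑ i, ∑ j, A i j * u i * v j := fun u v => by
    rw [Matrix.toBilin'_apply]
    refine Finset.sum_congr rfl fun i _ => Finset.sum_congr rfl fun j _ => by ring
  obtain ⟨C, hC, h⟩ := bilin_bound (V := Fin N → ℝ) (Matrix.toBilin' 1) (Matrix.toBilin' A)
    (fun u v => by
      rw [hG, hG, Finset.sum_comm]
      refine Finset.sum_congr rfl fun i _ => Finset.sum_congr rfl fun j _ => ?_
      have := hA.isHermitian.apply i j
      simp at this
      rw [this]; ring)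
    (fun u hu => by
      have := hA.dotProduct_mulVec_pos hu
      rw [Matrix.toBilin'_apply']
      simpa using this)
  refine ⟨C, hC, fun ξ => ?_⟩
  have := h ξ
  rw [hG] at this
  rw [Matrix.toBilin'_apply'] at this
  simpa [dotProduct] using this

theorem poincare {N : ℕ} (hN : 2 ≤ N) {D : Set (EuclideanSpace ℝ (Fin N))} (hD : IsCompact D)
    (A : Matrix (Fin N) (Fin N) ℝ) (hA : A.PosDef) :
    ∃ c : ℝ, 0 < c ∧ ∀ u : EuclideanSpace ℝ (Fin N) → ℝ, ContDiff ℝ (⊤ : ℕ∞) u →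
      HasCompactSupport u → tsupport u ⊆ D → c * ∫ x, u x ^ 2 ≤ ∫ x, enDens A u u x := by
  obtain ⟨C, hC, hCA⟩ := posdef_bound A hA
  obtain ⟨R, hR, hRD⟩ := hD.isBounded.exists_pos_norm_le
  let i0 : Fin N := ⟨0, by omega⟩
  let e : EuclideanSpace ℝ (Fin N) := EuclideanSpace.single i0 (1 : ℝ)
  refine ⟨(4 * R ^ 2 * C)⁻¹, by positivity, fun u hu hc hs => ?_⟩
  have hd : Differentiable ℝ u := hu.differentiable (by simp)
  have hdc : Continuous (fun x => fderiv ℝ u x e) :=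
    (hu.continuous_fderiv (by simp)).clm_apply continuous_const
  let p : EuclideanSpace ℝ (Fin N) →L[ℝ] ℝ := EuclideanSpace.proj i0
  have hpe : p e = 1 := by simp [p, e]
  have hpx : ∀ x, |p x| ≤ ‖x‖ := fun x => by simpa [p] using EuclideanSpace.norm_eq x ▸ PiLp.norm_apply_le x i0
  -- integration by parts
  have hfd : ∀ x, fderiv ℝ (fun x => u x * u x) x e = 2 * (u x * fderiv ℝ u x e) := fun x => by
    rw [fderiv_fun_mul (hd x) (hd x)]
    simp; ring
  have hI1 : Integrable (fun x => u x ^ 2) := by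
    simpa [pow_two] using mul_int hu hu hc
  have hI2 : Integrable (fun x => fderiv ℝ u x e ^ 2) := by
    simpa [pow_two] using pd_integrable hu hu hc e e
  have hI3 : Integrable (fun x => 2 * (u x * fderiv ℝ u x e) * p x) :=
    (((continuous_const.mul (hu.continuous.mul hdc)).mul p.continuous)).integrable_of_hasCompactSupport
      ((hc.mul_right (f' := fun x => fderiv ℝ u x e)).mul_left (f := fun _ => (2:ℝ))).mul_right
  have hibp : ∫ x, u x ^ 2 = - ∫ x, 2 * (u x * fderiv ℝ u x e) * p x := by
    have := integral_mul_fderiv_eq_neg_fderiv_mul_of_integrable (μ := volume)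
      (f := fun x => u x * u x) (g := fun x => p x) (v := e)
      (by simpa only [hfd] using hI3)
      (by simpa [hpe, pow_two] using hI1)
      ((((hu.continuous.mul hu.continuous)).mul p.continuous).integrable_of_hasCompactSupport
        (hc.mul_right (f' := u)).mul_right)
      (fun x _ => (hd x).mul (hd x)) (fun x _ => p.differentiableAt)
    simp only [hfd, ContinuousLinearMap.fderiv, hpe, mul_one] at this
    simpa [pow_two] using this
  have hpt : ∀ x, -(2 * (u x * fderiv ℝ u x e) * p x) ≤ (1/2) * u x ^ 2 + 2 * R ^ 2 * fderiv ℝ u x e ^ 2 := by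
    intro x
    by_cases hx : x ∈ tsupport u
    · have h1 := (hpx x).trans (hRD x (hs hx))
      have h2 : p x ^ 2 ≤ R ^ 2 := sq_le_sq' (abs_le.1 h1).1 (abs_le.1 h1).2
      nlinarith [sq_nonneg (u x + 2 * (p x * fderiv ℝ u x e)), mul_le_mul_of_nonneg_right h2 (sq_nonneg (fderiv ℝ u x e))]
    · have : u x = 0 := image_eq_zero_of_notMem_tsupport hx
      rw [this]
      simp; positivity
  have h2 : ∫ x, fderiv ℝ u x e ^ 2 ≤ C * ∫ x, enDens A u u x := by
    rw [← integral_const_mul]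
    refine integral_mono hI2 ((enDens_integrable A hu hu hc).const_mul _) fun x => ?_
    refine le_trans ?_ (hCA (fun i => fderiv ℝ u x (EuclideanSpace.single i (1 : ℝ))))
    rw [pow_two]
    exact Finset.single_le_sum (f := fun i => fderiv ℝ u x (EuclideanSpace.single i (1 : ℝ)) * fderiv ℝ u x (EuclideanSpace.single i (1 : ℝ))) (fun i _ => mul_self_nonneg _) (Finset.mem_univ i0)
  rw [inv_mul_le_iff₀ (by positivity)]
  have h3 : ∫ x, u x ^ 2 ≤ 4 * R ^ 2 * ∫ x, fderiv ℝ u x e ^ 2 := by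
    have : (∫ x, u x ^ 2) ≤ (1/2) * (∫ x, u x ^ 2) + (2 * R ^ 2) * (∫ x, fderiv ℝ u x e ^ 2) := by
      calc (∫ x, u x ^ 2) = ∫ x, -(2 * (u x * fderiv ℝ u x e) * p x) := by rw [integral_neg, hibp]
        _ ≤ ∫ x, ((1/2) * u x ^ 2 + 2 * R ^ 2 * fderiv ℝ u x e ^ 2) :=
          integral_mono hI3.neg ((hI1.const_mul _).add (hI2.const_mul _)) hpt
        _ = _ := by rw [integral_add (hI1.const_mul _) (hI2.const_mul _), integral_const_mul, integral_const_mul]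
    have h4 : ∫ x, 4 * R ^ 2 * fderiv ℝ u x e ^ 2 = 4 * R ^ 2 * ∫ x, fderiv ℝ u x e ^ 2 := integral_const_mul _ _
    linarith
  calc _ ≤ _ := h3
    _ ≤ 4 * R ^ 2 * (C * ∫ x, enDens A u u x) := by gcongr
    _ = _ := by ring

theorem lamk_ge {N : ℕ} {Ω : Set (EuclideanSpace ℝ (Fin N))} (A : Matrix (Fin N) (Fin N) ℝ)
    {k : ℕ} (hk : 1 ≤ k) {c : ℝ}
    (hne : {μ : ℝ | ∃ V : Submodule ℝ (EuclideanSpace ℝ (Fin N) → ℝ),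
    Module.finrank ℝ V = k ∧
    (∀ u ∈ V, ContDiff ℝ (⊤ : ℕ∞) u ∧ HasCompactSupport u ∧ tsupport u ⊆ Ω) ∧
    μ = sSup {q : ℝ | ∃ u ∈ V, u ≠ 0 ∧ q = rayleighQuot A Ω u}}.Nonempty)
    (h : ∀ u : EuclideanSpace ℝ (Fin N) → ℝ, ContDiff ℝ (⊤ : ℕ∞) u →
      HasCompactSupport u → tsupport u ⊆ Ω → c * ∫ x, u x ^ 2 ≤ ∫ x, enDens A u u x) :
    c ≤ lamk A Ω k := by
  refine le_csInf hne ?_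
  rintro μ ⟨V, hVk, hV, rfl⟩
  have : FiniteDimensional ℝ V := Module.finite_of_finrank_pos (by omega)
  have : Nontrivial V := Module.nontrivial_of_finrank_pos (R := ℝ) (by omega)
  obtain ⟨u, hu⟩ := exists_ne (0 : V)
  have hu' : u.1 ≠ 0 := fun h => hu (Subtype.ext h)
  obtain ⟨h1, h2, h3⟩ := hV u u.2
  refine le_trans ?_ (le_csSup (rq_bddAbove A V hV) ⟨u, u.2, hu', rfl⟩)
  rw [rayleigh_eq A h3, le_div_iff₀ (by simpa [pow_two] using sq_int_pos h1 h2 hu')]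
  exact h u h1 h2 h3

theorem lamset_nonempty {N : ℕ} (hN : 2 ≤ N) {Ω : Set (EuclideanSpace ℝ (Fin N))} (hO : IsOpen Ω)
    (hΩ : Ω.Nonempty) (A : Matrix (Fin N) (Fin N) ℝ) (k : ℕ) :
    {μ : ℝ | ∃ V : Submodule ℝ (EuclideanSpace ℝ (Fin N) → ℝ),
    Module.finrank ℝ V = k ∧
    (∀ u ∈ V, ContDiff ℝ (⊤ : ℕ∞) u ∧ HasCompactSupport u ∧ tsupport u ⊆ Ω) ∧
    μ = sSup {q : ℝ | ∃ u ∈ V, u ≠ 0 ∧ q = rayleighQuot A Ω u}}.Nonempty := by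
  have : Nontrivial (Fin N) := Fin.nontrivial_iff_two_le.2 hN
  obtain ⟨x0, hx0⟩ := hΩ
  have hinf : Ω.Infinite := infinite_of_mem_nhds x0 (hO.mem_nhds hx0)
  have := hinf.to_subtype
  let c : Fin k ↪ Ω := (Fin.valEmbedding).trans (Infinite.natEmbedding Ω)
  have hnhds : ∀ i, Ω \ ((fun j => (c j).1) '' {i}ᶜ) ∈ 𝓝 (c i).1 := fun i => by
    refine (hO.sdiff ((Set.toFinite _).isClosed)).mem_nhds ⟨(c i).2, ?_⟩
    rintro ⟨j, hj, h⟩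
    exact hj (c.injective (Subtype.ext h))
  choose f hf1 hf2 hf3 _ hf5 using fun i => exists_contDiff_tsupport_subset (n := ⊤) (hnhds i)
  have hf0 : ∀ i j, j ≠ i → f i (c j) = 0 := fun i j hij =>
    image_eq_zero_of_notMem_tsupport fun h => (hf1 i h).2 ⟨j, hij, rfl⟩
  have hli : LinearIndependent ℝ f := by
    rw [Fintype.linearIndependent_iff]
    intro g hg i
    have := congrFun hg (c i).1
    simp only [Finset.sum_apply, Pi.smul_apply, smul_eq_mul, Pi.zero_apply] at this
    rw [Finset.sum_eq_single i (fun j _ hj => by rw [hf0 j i hj.symm, mul_zero]) (by simp), hf5] at this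
    simpa using this
  refine ⟨_, Submodule.span ℝ (Set.range f), ?_, ?_, rfl⟩
  · rw [finrank_span_eq_card hli]; simp
  · intro u hu
    induction hu using Submodule.span_induction with
    | mem x h =>
      obtain ⟨i, rfl⟩ := h
      exact ⟨hf3 i, hf2 i, fun x hx => (hf1 i hx).1⟩
    | zero => exact ⟨contDiff_const, HasCompactSupport.zero, by simp [tsupport]⟩
    | add x y _ _ hx hy =>
      refine ⟨hx.1.add hy.1, hx.2.1.add hy.2.1, ?_⟩
      exact (tsupport_add x y).trans (Set.union_subset hx.2.2 hy.2.2)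
    | smul a x _ hx =>
      refine ⟨contDiff_const.smul hx.1, hx.2.1.smul_left (f := fun _ => a), ?_⟩
      exact (tsupport_smul_subset_right (fun _ => a) x).trans hx.2.2

open scoped Pointwise in
theorem lamk_scale {N : ℕ} (hN : 2 ≤ N) {Ω Ω' : Set (EuclideanSpace ℝ (Fin N))} (hO : IsOpen Ω)
    (hΩ : Ω.Nonempty) (A : Matrix (Fin N) (Fin N) ℝ) (hA : A.PosDef) (k : ℕ)
    (a : EuclideanSpace ℝ (Fin N)) {t : ℝ} (ht : 0 < t) (h : ∀ y ∈ Ω, a + t • y ∈ Ω') :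
    t ^ 2 * lamk A Ω' k ≤ lamk A Ω k := by
  obtain ⟨C, hC, hCA⟩ := posdef_bound A hA
  have hen : ∀ u x, 0 ≤ enDens A u u x := fun u x => by
    have := hCA (fun i => fderiv ℝ u x (EuclideanSpace.single i (1 : ℝ)))
    have h2 : 0 ≤ ∑ i, fderiv ℝ u x (EuclideanSpace.single i (1 : ℝ)) *
        fderiv ℝ u x (EuclideanSpace.single i (1 : ℝ)) :=
      Finset.sum_nonneg fun i _ => mul_self_nonneg _
    exact (mul_nonneg_iff_of_pos_left hC).1 (h2.trans this)
  refine le_csInf (lamset_nonempty hN hO hΩ A k) ?_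
  rintro μ ⟨V, hVk, hV, rfl⟩
  rw [mul_comm, ← le_div_iff₀ (by positivity)]
  let φ : EuclideanSpace ℝ (Fin N) ≃ₜ EuclideanSpace ℝ (Fin N) :=
    (Homeomorph.smulOfNeZero t ht.ne').trans (Homeomorph.addLeft a)
  have hφ : ∀ y, φ y = a + t • y := fun y => rfl
  have hψ : ∀ y, φ.symm y = t⁻¹ • (y - a) := fun y => by
    rw [Homeomorph.symm_apply_eq, hφ, smul_smul, mul_inv_cancel₀ ht.ne']
    simp
  have hψs : ContDiff ℝ (⊤ : ℕ∞) φ.symm := by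
    have : (φ.symm : EuclideanSpace ℝ (Fin N) → _) = fun y => t⁻¹ • (y - a) := funext hψ
    rw [this]
    fun_prop
  let F := LinearEquiv.funCongrLeft ℝ ℝ φ.symm.toEquiv
  have hF : ∀ u, F u = u ∘ φ.symm := fun u => rfl
  have hts : ∀ u : EuclideanSpace ℝ (Fin N) → ℝ, tsupport (u ∘ φ.symm) = φ '' tsupport u := fun u => by
    rw [tsupport_comp_eq_preimage, Homeomorph.image_eq_preimage_symm]
  have hint : ∀ g : EuclideanSpace ℝ (Fin N) → ℝ, ∫ y, g (φ.symm y) = t ^ N * ∫ x, g x := fun g => by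
    simp only [hψ]
    rw [integral_sub_right_eq_self (fun y => g (t⁻¹ • y)) a,
      Measure.integral_comp_inv_smul_of_nonneg _ _ ht.le]
    simp
  have hfd : ∀ (u : EuclideanSpace ℝ (Fin N) → ℝ) x v, Differentiable ℝ u → fderiv ℝ (u ∘ φ.symm) x v = t⁻¹ * fderiv ℝ u (φ.symm x) v := by
    intro u x v hu
    have h1 : HasFDerivAt φ.symm (t⁻¹ • ContinuousLinearMap.id ℝ (EuclideanSpace ℝ (Fin N))) x := by
      have : (φ.symm : EuclideanSpace ℝ (Fin N) → _) = fun y => t⁻¹ • (y - a) := funext hψ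
      rw [this]
      exact ((hasFDerivAt_id x).sub_const a).const_smul t⁻¹
    rw [((hu (φ.symm x)).hasFDerivAt.comp x h1).fderiv]
    simp
  have hV' : ∀ u ∈ V.map F.toLinearMap, ContDiff ℝ (⊤ : ℕ∞) u ∧ HasCompactSupport u ∧ tsupport u ⊆ Ω' := by
    rintro _ ⟨u, hu, rfl⟩
    obtain ⟨h1, h2, h3⟩ := hV u hu
    change ContDiff ℝ _ (u ∘ φ.symm) ∧ HasCompactSupport (u ∘ φ.symm) ∧ tsupport (u ∘ φ.symm) ⊆ Ω'
    refine ⟨h1.comp hψs, h2.comp_homeomorph φ.symm, ?_⟩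
    rw [hts]
    rintro _ ⟨x, hx, rfl⟩
    exact h x (h3 hx)
  have hray : ∀ u ∈ V, rayleighQuot A Ω' (u ∘ φ.symm) = (t ^ 2)⁻¹ * rayleighQuot A Ω u := by
    intro u hu
    rw [rayleigh_eq A (hV u hu).2.2, rayleigh_eq A (u := u ∘ φ.symm) (hV' _ ⟨u, hu, rfl⟩).2.2]
    have e1 : ∀ y, enDens A (u ∘ φ.symm) (u ∘ φ.symm) y = (t ^ 2)⁻¹ * enDens A u u (φ.symm y) := by
      intro y
      simp only [enDens, Finset.mul_sum, hfd u y _ ((hV u hu).1.differentiable (by simp))]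
      refine Finset.sum_congr rfl fun i _ => Finset.sum_congr rfl fun j _ => ?_
      field_simp
    simp only [e1, integral_const_mul, Function.comp]
    rw [hint (enDens A u u), hint (fun x => u x ^ 2)]
    have : t ^ N ≠ 0 := by positivity
    rw [mul_left_comm, mul_div_mul_left _ _ this, mul_div_assoc]
  refine csInf_le ⟨0, ?_⟩ ⟨V.map F.toLinearMap, ?_, hV', ?_⟩
  · rintro μ ⟨W, _, hW, rfl⟩
    refine Real.sSup_nonneg ?_
    rintro q ⟨u, hu, _, rfl⟩
    rw [rayleigh_eq A (hW u hu).2.2]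
    exact div_nonneg (integral_nonneg (hen u)) (integral_nonneg fun x => sq_nonneg _)
  · rw [← hVk]
    exact LinearEquiv.finrank_map_eq F V
  · have : {q : ℝ | ∃ u ∈ V.map F.toLinearMap, u ≠ 0 ∧ q = rayleighQuot A Ω' u} =
        (t ^ 2)⁻¹ • {q : ℝ | ∃ u ∈ V, u ≠ 0 ∧ q = rayleighQuot A Ω u} := by
      ext q
      rw [Set.mem_smul_set]
      constructor
      · rintro ⟨_, ⟨u, hu, rfl⟩, h0, rfl⟩
        refine ⟨_, ⟨u, hu, fun h => h0 (by rw [h, map_zero]), rfl⟩, ?_⟩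
        exact (hray u hu).symm
      · rintro ⟨_, ⟨u, hu, h0, rfl⟩, rfl⟩
        refine ⟨F u, ⟨u, hu, rfl⟩, fun h => h0 (by simpa using h), (hray u hu).symm⟩
    rw [this, Real.sSup_smul_of_nonneg (by positivity), smul_eq_mul, div_eq_inv_mul]

theorem contract {N : ℕ} {L Ω : Set (EuclideanSpace ℝ (Fin N))} (hL : Convex ℝ L)
    (hO : IsOpen Ω) (hc : Convex ℝ Ω) {x0 : EuclideanSpace ℝ (Fin N)} {r ε δ : ℝ}
    (hb : ball x0 r ⊆ L) (hs : L ⊆ thickening ε Ω) (hε : 0 < ε) (hδ : 0 < δ) (hδ1 : δ < 1)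
    (hεδ : ε < δ * r) {y : EuclideanSpace ℝ (Fin N)} (hy : y ∈ L) :
    δ • x0 + (1 - δ) • y ∈ Ω := by
  by_contra hz
  set z := δ • x0 + (1 - δ) • y with hzdef
  obtain ⟨f, hf⟩ := geometric_hahn_banach_open_point hc hO hz
  set v := (InnerProductSpace.toDual ℝ (EuclideanSpace ℝ (Fin N))).symm f with hv
  have hfv : ∀ w, f w = inner ℝ v w := fun w => by
    rw [hv, InnerProductSpace.toDual_symm_apply]
  have hzL : z ∈ L := hL (hb (mem_ball_self (by nlinarith))) hy hδ.le (by linarith) (by ring)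
  obtain ⟨w0, hw0, _⟩ := mem_thickening_iff.1 (hs hzL)
  have hv0 : v ≠ 0 := by
    intro h
    have := hf w0 hw0
    rw [hfv, hfv, h] at this
    simp at this
  have hvn : 0 < ‖v‖ := norm_pos_iff.2 hv0
  set e := (‖v‖)⁻¹ • v with he
  have hen : ‖e‖ = 1 := by rw [he, norm_smul]; simp [hvn.ne']
  have hfe : f e = ‖v‖ := by
    rw [hfv, he, inner_smul_right, real_inner_self_eq_norm_mul_norm]
    field_simp
  have hp : z + ε • e ∈ L := by
    have h1 : x0 + (ε / δ) • e ∈ L := by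
      apply hb
      rw [mem_ball, dist_eq_norm, add_sub_cancel_left, norm_smul, hen, mul_one, Real.norm_eq_abs,
        abs_of_pos (by positivity), div_lt_iff₀ hδ]
      linarith
    have h2 := hL h1 hy hδ.le (by linarith : 0 ≤ 1 - δ) (by ring)
    convert h2 using 1
    have h3 : δ • (ε / δ) • e = ε • e := by
      rw [smul_smul, mul_div_cancel₀ _ hδ.ne']
    rw [hzdef, smul_add, h3]
    abel
  obtain ⟨w, hw, hd⟩ := mem_thickening_iff.1 (hs hp)
  have h1 := hf w hw
  have h2 : f (z + ε • e - w) ≤ ‖v‖ * ‖z + ε • e - w‖ := by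
    rw [hfv]; exact real_inner_le_norm _ _
  rw [map_sub, map_add, map_smul, hfe, smul_eq_mul] at h2
  rw [dist_eq_norm] at hd
  nlinarith

theorem inradius {N : ℕ} {D : Set (EuclideanSpace ℝ (Fin N))} (hD : IsCompact D) {m : ℝ} (hm : 0 < m) :
    ∃ r > 0, ∀ Ω, InCm D m Ω → ∃ x, ball x r ⊆ Ω := by
  by_contra! H
  choose Ω hΩ hno using fun n : ℕ => H (1 / ((n : ℝ) + 1)) (by positivity)
  have hne : ∀ n, (Ω n).Nonempty := fun n => by
    rw [Set.nonempty_iff_ne_empty]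
    intro h
    have := (hΩ n).2.2.2
    rw [h] at this
    simp at this
    linarith
  have hcl : ∀ n, closure (Ω n) ⊆ D := fun n => closure_minimal (hΩ n).1 hD.isClosed
  let K : ℕ → TopologicalSpace.NonemptyCompacts (EuclideanSpace ℝ (Fin N)) := fun n =>
    ⟨⟨closure (Ω n), hD.of_isClosed_subset isClosed_closure (hcl n)⟩, (hne n).closure⟩
  have hK : ∀ n, (K n : Set (EuclideanSpace ℝ (Fin N))) = closure (Ω n) := fun n => rfl
  obtain ⟨L, hLD, φ, hφ, hlim⟩ :=
    (TopologicalSpace.NonemptyCompacts.isCompact_subsets_of_isCompact hD).tendsto_subseq (x := K) hcl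
  have hev : ∀ ε > 0, ∀ᶠ n in atTop, Ω (φ n) ⊆ thickening ε (L : Set _) ∧
      (L : Set _) ⊆ thickening ε (Ω (φ n)) := by
    intro ε hε
    filter_upwards [(Metric.tendsto_nhds.1 hlim) ε hε] with n hn
    have hn' : hausdorffDist (closure (Ω (φ n))) (L : Set _) < ε := hn
    have hfin : Metric.hausdorffEDist (closure (Ω (φ n))) (L : Set _) ≠ ⊤ :=
      hausdorffEDist_ne_top_of_nonempty_of_bounded (K (φ n)).nonempty L.nonempty
        (K (φ n)).isCompact.isBounded L.isCompact.isBounded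
    constructor
    · intro x hx
      obtain ⟨y, hy, hd⟩ := exists_dist_lt_of_hausdorffDist_lt (subset_closure hx) hn' hfin
      exact mem_thickening_iff.2 ⟨y, hy, hd⟩
    · intro x hx
      rw [← thickening_closure]
      obtain ⟨y, hy, hd⟩ := exists_dist_lt_of_hausdorffDist_lt' hx hn' hfin
      exact mem_thickening_iff.2 ⟨y, hy, by rwa [dist_comm]⟩
  have hLc : Convex ℝ (L : Set (EuclideanSpace ℝ (Fin N))) := by
    intro x hx y hy a b ha hb hab
    rw [← L.isCompact.isClosed.closure_eq, closure_eq_iInter_thickening]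
    simp only [Set.mem_iInter]
    intro ε hε
    obtain ⟨n, h1, h2⟩ := (hev (ε / 2) (by positivity)).exists
    have h3 := (hΩ (φ n)).2.2.1.thickening (ε / 2) (h2 hx) (h2 hy) ha hb hab
    have h4 := thickening_subset_of_subset (ε / 2) h1 h3
    have h5 := thickening_thickening_subset (ε / 2) (ε / 2) _ h4
    simpa using h5
  have hvol : ENNReal.ofReal m ≤ volume (L : Set (EuclideanSpace ℝ (Fin N))) := by
    refine ge_of_tendsto ((tendsto_measure_cthickening_of_isCompact L.isCompact).mono_left
      (nhdsWithin_le_nhds (s := Set.Ioi 0))) ?_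
    filter_upwards [self_mem_nhdsWithin] with ε hε
    obtain ⟨n, h1, _⟩ := (hev ε hε).exists
    rw [← (hΩ (φ n)).2.2.2]
    exact measure_mono (h1.trans (thickening_subset_cthickening _ _))
  have hint : (interior (L : Set (EuclideanSpace ℝ (Fin N)))).Nonempty := by
    rw [Set.nonempty_iff_ne_empty]
    intro h
    have h1 := hLc.addHaar_frontier volume
    rw [frontier, h, Set.sdiff_empty, L.isCompact.isClosed.closure_eq] at h1
    rw [h1] at hvol
    simp at hvol
    linarith
  obtain ⟨x, hx⟩ := hint
  obtain ⟨ρ, hρ, hball⟩ := Metric.isOpen_iff.1 isOpen_interior x hx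
  have hball' := hball.trans interior_subset
  have hsm : ∀ᶠ n in atTop, 1 / (((φ n : ℕ) : ℝ) + 1) < ρ / 2 :=
    (tendsto_one_div_add_atTop_nhds_zero_nat.comp hφ.tendsto_atTop).eventually_lt_const (by positivity)
  obtain ⟨n, ⟨_, h2⟩, h3⟩ := ((hev (ρ / 4) (by positivity)).and hsm).exists
  refine hno (φ n) x fun z hz => ?_
  have hz' : x + (2 : ℝ) • (z - x) ∈ (L : Set _) := by
    apply hball'
    rw [mem_ball, dist_eq_norm] at hz ⊢
    rw [add_sub_cancel_left, norm_smul]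
    simp only [Real.norm_ofNat]
    linarith
  have := contract (δ := 1 / 2) hLc (hΩ (φ n)).2.1 (hΩ (φ n)).2.2.1 hball' h2 (by positivity)
    (by norm_num) (by norm_num) (by linarith) hz'
  convert this using 1
  module

theorem eigenvalue_bounded_continuous_const_coeff {N : ℕ} (hN : 2 ≤ N)
    (D : Set (EuclideanSpace ℝ (Fin N))) (hD : IsCompact D)
    (m : ℝ) (hm : 0 < m) (hne : ∃ Ω, InCm D m Ω)
    (A : Matrix (Fin N) (Fin N) ℝ) (hA_symm : A.IsSymm) (hA_pos : A.PosDef)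
    (k : ℕ) (hk : 1 ≤ k) :
    (∃ c C : ℝ, 0 < c ∧ c ≤ C ∧ ∀ Ω, InCm D m Ω → c ≤ lamk A Ω k ∧ lamk A Ω k ≤ C) ∧
    (∀ (Ωn : ℕ → Set (EuclideanSpace ℝ (Fin N))) (L : Set (EuclideanSpace ℝ (Fin N))),
      (∀ n, InCm D m (Ωn n)) → InCm D m L → UnifConvTo Ωn L →
      Filter.Tendsto (fun n => lamk A (Ωn n) k) Filter.atTop (nhds (lamk A L k))) := by
  obtain ⟨r, hr, hin⟩ := inradius hD hm
  have hnon : ∀ Ω, InCm D m Ω → Ω.Nonempty := fun Ω h => by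
    obtain ⟨x, hx⟩ := hin Ω h
    exact ⟨x, hx (mem_ball_self hr)⟩
  constructor
  · obtain ⟨c, hc, hP⟩ := poincare hN hD A hA_pos
    have h1 : ∀ Ω, InCm D m Ω → c ≤ lamk A Ω k := fun Ω h =>
      lamk_ge A hk (lamset_nonempty hN h.2.1 (hnon Ω h) A k)
        fun u hu hcs hs => hP u hu hcs (hs.trans h.1)
    have h2 : ∀ Ω, InCm D m Ω → lamk A Ω k ≤ lamk A (ball 0 r) k := fun Ω h => by
      obtain ⟨x, hx⟩ := hin Ω h
      have := lamk_scale hN (Ω := ball 0 r) (Ω' := Ω) isOpen_ball ⟨0, mem_ball_self hr⟩ A hA_pos k x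
        one_pos (fun y hy => hx (by simpa using hy))
      simpa using this
    obtain ⟨Ω0, h0⟩ := hne
    exact ⟨c, _, hc, (h1 _ h0).trans (h2 _ h0), fun Ω h => ⟨h1 Ω h, h2 Ω h⟩⟩
  · intro Ωn L hΩ hL hconv
    have key : ∀ Ω Ω' δ, InCm D m Ω → InCm D m Ω' → 0 < δ → δ < 1 → Ω ⊆ thickening (δ * r / 2) Ω' →
        (1 - δ) ^ 2 * lamk A Ω' k ≤ lamk A Ω k := by
      intro Ω Ω' δ h h' hδ hδ1 hs
      obtain ⟨x, hx⟩ := hin Ω h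
      have hp : 0 < δ * r := by positivity
      exact lamk_scale hN h.2.1 (hnon Ω h) A hA_pos k (δ • x) (by linarith) fun y hy =>
        contract h.2.2.1 h'.2.1 h'.2.2.1 hx hs (by positivity) hδ hδ1 (by linarith) hy
    have hev : ∀ δ, 0 < δ → δ < 1 → ∀ᶠ n in atTop, (1 - δ) ^ 2 * lamk A L k ≤ lamk A (Ωn n) k ∧
        lamk A (Ωn n) k ≤ lamk A L k / (1 - δ) ^ 2 := by
      intro δ hδ hδ1
      filter_upwards [hconv (δ * r / 2) (by positivity)] with n hn
      refine ⟨key _ _ δ (hΩ n) hL hδ hδ1 hn.1, ?_⟩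
      have h1 : 0 < 1 - δ := by linarith
      rw [le_div_iff₀ (by positivity), mul_comm]
      exact key _ _ δ hL (hΩ n) hδ hδ1 hn.2
    have t1 : Tendsto (fun δ : ℝ => (1 - δ) ^ 2 * lamk A L k) (𝓝[>] 0) (𝓝 (lamk A L k)) := by
      have : ContinuousAt (fun δ : ℝ => (1 - δ) ^ 2 * lamk A L k) 0 := by fun_prop
      simpa using this.tendsto.mono_left (nhdsWithin_le_nhds (s := Set.Ioi 0))
    have t2 : Tendsto (fun δ : ℝ => lamk A L k / (1 - δ) ^ 2) (𝓝[>] 0) (𝓝 (lamk A L k)) := by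
      have : ContinuousAt (fun δ : ℝ => lamk A L k / (1 - δ) ^ 2) 0 := by
        fun_prop (disch := norm_num)
      simpa using this.tendsto.mono_left (nhdsWithin_le_nhds (s := Set.Ioi 0))
    have hδ : ∀ᶠ δ : ℝ in 𝓝[>] 0, 0 < δ ∧ δ < 1 := by
      filter_upwards [self_mem_nhdsWithin, nhdsWithin_le_nhds (Iio_mem_nhds one_pos)] with δ h1 h2
      exact ⟨h1, h2⟩
    rw [tendsto_order]
    constructor
    · intro a ha
      obtain ⟨δ, h1, h2⟩ := ((t1.eventually_const_lt ha).and hδ).exists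
      filter_upwards [hev δ h2.1 h2.2] with n hn
      exact h1.trans_le hn.1
    · intro a ha
      obtain ⟨δ, h1, h2⟩ := ((t2.eventually_lt_const ha).and hδ).exists
      filter_upwards [hev δ h2.1 h2.2] with n hn
      exact hn.2.trans_lt h1
end
end
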